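/- Let G and G' be bow-free acyclic path diagrams on the same finite vertex type V. If G and G' have the same skeleton and the same collider triples, then they are algebraically equivalent: A(G) = A(G'). (Theorem 6 of the paper.) -/

import Mathlib

open Matrix

structure MixedGraph (V : Type*) where
  D : V → V → Prop
  B : V → V → Prop
  symm : ∀ v w, B v w → B w v
  irrefl : ∀ v, ¬ B v v

namespace MixedGraph

variable {V : Type*}

/-- The graph is acyclic: no directed cycles. -/
def Acyclic (G : MixedGraph V) : Prop := ∀ v, ¬ Relation.TransGen G.D v v

/-- The graph is simple: for distinct `v, w`, at most one of
`D v w`, `D w v`, `B v w` holds. -/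
def Simple (G : MixedGraph V) : Prop :=
  ∀ v w, v ≠ w →
    ¬ (G.D v w ∧ G.D w v) ∧ ¬ (G.D v w ∧ G.B v w) ∧ ¬ (G.D w v ∧ G.B v w)

/-- A bow-free acyclic path diagram: a simple acyclic mixed graph. -/
def IsBAP (G : MixedGraph V) : Prop := G.Acyclic ∧ G.Simple

/-- `Λ` is compatible with `G`. -/
def LamCompat (G : MixedGraph V) (Λ : Matrix V V ℝ) : Prop :=
  ∀ v w, ¬ G.D v w → Λ v w = 0

/-- `Ω` is compatible with `G`. -/
def OmCompat [Fintype V] (G : MixedGraph V) (Ω : Matrix V V ℝ) : Prop :=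
  Ω.PosDef ∧ ∀ v w, v ≠ w → ¬ G.B v w → ¬ G.B w v → Ω v w = 0

/-- The model `M(G)` of a mixed graph. -/
def model [Fintype V] [DecidableEq V] (G : MixedGraph V) : Set (Matrix V V ℝ) :=
  {S | ∃ Λ Ω : Matrix V V ℝ, G.LamCompat Λ ∧ G.OmCompat Ω ∧
    S = ((1 - Λ)⁻¹)ᵀ * Ω * (1 - Λ)⁻¹}

/-- The algebraic model `A(G)`: the real Zariski closure of `M(G)`. -/
def algModel [Fintype V] [DecidableEq V] (G : MixedGraph V) : Set (Matrix V V ℝ) :=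
  {S | ∀ p : MvPolynomial (V × V) ℝ,
    (∀ T ∈ G.model, MvPolynomial.eval (fun e => T e.1 e.2) p = 0) →
    MvPolynomial.eval (fun e => S e.1 e.2) p = 0}

/-- The skeleton (adjacency relation) of `G`. -/
def adj (G : MixedGraph V) (v w : V) : Prop :=
  v ≠ w ∧ (G.D v w ∨ G.D w v ∨ G.B v w)

/-- A collider triple of `G`. -/
def ColliderTriple (G : MixedGraph V) (u v w : V) : Prop :=
  u ≠ v ∧ v ≠ w ∧ u ≠ w ∧ (G.D u v ∨ G.B u v) ∧ (G.D w v ∨ G.B w v)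

/-- A v-structure of `G`. -/
def VStructure (G : MixedGraph V) (u v w : V) : Prop :=
  G.ColliderTriple u v w ∧ ¬ G.adj u w

end MixedGraph

/-!
A trek is a path without colliders, so the treks of a graph depend only on its skeleton and its
collider triples. Rescaling the coordinates preserves the model, so it suffices to describe the
matrices of `M(G)` with unit diagonal. By Wright's path rule these are the positive definite
matrices whose entries are sums over treks of products of edge weights, for a symmetric matrix of
edge weights. To prove the path rule, let `T` be the matrix of trek sums. A trek from `w` to a
non-descendant `v` of `w` starts either with an edge `w ← u`, followed by a trek, or with an edge
`w ↔ u`, followed by a directed path; hence `(1 - Λ)ᵀ T (1 - Λ)` agrees with `Ω` off the diagonal.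
Since `(1 - Λ)⁻¹` is unitriangular, this together with the diagonal of `T` determines `T`.
Thus `M(G)` itself depends only on the skeleton and the collider triples.
-/

section WalkWeight

variable {V R : Type*} [Monoid R] {a : Matrix V V R}

/-- The weight of a walk, given as the list of its vertices: the product of the weights of its
steps. -/
def walkWeight (a : Matrix V V R) (l : List V) : R :=
  (l.zipWith a l.tail).prod

theorem walkWeight_singleton (x : V) : walkWeight a [x] = 1 :=
  List.prod_nil

theorem walkWeight_cons_cons (x y : V) (l : List V) :
    walkWeight a (x :: y :: l) = a x y * walkWeight a (y :: l) :=
  List.prod_cons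

theorem walkWeight_append_cons (l₁ l₂ : List V) (x : V) :
    walkWeight a (l₁ ++ x :: l₂) = walkWeight a (l₁ ++ [x]) * walkWeight a (x :: l₂) := by
  induction l₁ with
  | nil => simp [walkWeight_singleton]
  | cons y l₁ ih =>
    cases l₁ with
    | nil => simp [walkWeight_cons_cons, walkWeight_singleton]
    | cons z l₁ =>
      simp only [List.cons_append, walkWeight_cons_cons] at ih ⊢
      rw [ih, mul_assoc]

theorem walkWeight_reverse {R : Type*} [CommMonoid R] {a : Matrix V V R} (ha : a.IsSymm)
    (l : List V) : walkWeight a l.reverse = walkWeight a l := by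
  induction l with
  | nil => rfl
  | cons x l ih =>
    cases l with
    | nil => rfl
    | cons y l =>
      calc walkWeight a (x :: y :: l).reverse
          = walkWeight a (l.reverse ++ y :: [x]) := by simp
        _ = walkWeight a (y :: l).reverse * walkWeight a [y, x] := by
          rw [walkWeight_append_cons, List.reverse_cons]
        _ = walkWeight a (x :: y :: l) := by
          rw [ih, walkWeight_cons_cons, walkWeight_cons_cons, walkWeight_singleton, mul_one,
            ha.apply x y, mul_comm]

end WalkWeight

section PathSum

variable {V R : Type*} [Finite V] [Semiring R] {a : Matrix V V R} {P : List V → Prop}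

theorem finite_setOf_nodup : {l : List V | l.Nodup}.Finite := by
  classical
  have := Fintype.ofFinite V
  exact Finite.of_fintype {l : List V // l.Nodup}

/-- The paths from `w` to `v` with property `P`, a path being a list of distinct vertices. -/
noncomputable def pathsBetween (P : List V → Prop) (w v : V) : Finset (List V) :=
  (finite_setOf_nodup.subset
    (Set.sep_subset _ fun l => P l ∧ l.head? = some w ∧ l.getLast? = some v)).toFinset

theorem mem_pathsBetween {w v : V} {l : List V} :
    l ∈ pathsBetween P w v ↔ l.Nodup ∧ P l ∧ l.head? = some w ∧ l.getLast? = some v := by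
  simp [pathsBetween]

theorem pathsBetween_self {v : V} (hP : P [v]) : pathsBetween P v v = {[v]} := by
  ext l
  rw [mem_pathsBetween, Finset.mem_singleton]
  constructor
  · rintro ⟨hnodup, -, hhead, hlast⟩
    obtain ⟨l, rfl⟩ := List.head?_eq_some_iff.1 hhead
    cases l with
    | nil => rfl
    | cons y l =>
      rw [List.getLast?_cons_cons] at hlast
      exact absurd (List.mem_of_getLast? hlast) (List.nodup_cons.1 hnodup).1
  · rintro rfl
    simp [hP]

/-- The matrix whose `(w, v)` entry is the total weight of the paths from `w` to `v` with
property `P`. -/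
noncomputable def pathSum (P : List V → Prop) (a : Matrix V V R) : Matrix V V R :=
  of fun w v => ∑ l ∈ pathsBetween P w v, walkWeight a l

theorem pathSum_apply (w v : V) :
    pathSum P a w v = ∑ l ∈ pathsBetween P w v, walkWeight a l := rfl

theorem pathSum_false : pathSum (fun _ => False) a = 0 := by
  ext w v
  refine Finset.sum_eq_zero fun l hl => ?_
  exact (mem_pathsBetween.1 hl).2.1.elim

theorem pathSum_apply_self {v : V} (hP : P [v]) : pathSum P a v v = 1 := by
  rw [pathSum_apply, pathsBetween_self hP, Finset.sum_singleton, walkWeight_singleton]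

theorem isSymm_pathSum {R : Type*} [CommSemiring R] {a : Matrix V V R} (ha : a.IsSymm)
    (hP : ∀ l, P l → P l.reverse) : (pathSum P a).IsSymm := by
  have reverse_mem {w v : V} {l : List V} (hl : l ∈ pathsBetween P w v) :
      l.reverse ∈ pathsBetween P v w := by
    rw [mem_pathsBetween] at hl ⊢
    obtain ⟨hnodup, hPl, hhead, hlast⟩ := hl
    exact ⟨List.nodup_reverse.2 hnodup, hP l hPl, by simpa using hlast, by simpa using hhead⟩
  refine .ext fun w v => ?_
  exact Finset.sum_bij' (fun l _ => l.reverse) (fun l _ => l.reverse)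
    (fun _ => reverse_mem) (fun _ => reverse_mem) (by simp) (by simp)
    fun l _ => (walkWeight_reverse ha l).symm

end PathSum

theorem pathSum_apply_eq_sum_cons {V R : Type*} [Fintype V] [Semiring R] {a : Matrix V V R}
    {P : List V → Prop} {Q : V → List V → Prop} {w v : V} (hwv : w ≠ v)
    (h : ∀ u l, (u :: l).getLast? = some v →
      ((w :: u :: l).Nodup ∧ P (w :: u :: l) ↔ (u :: l).Nodup ∧ Q u (u :: l))) :
    pathSum P a w v = ∑ u, a w u * pathSum (Q u) a u v := by
  simp only [pathSum_apply, Finset.mul_sum]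
  rw [Finset.sum_sigma']
  symm
  refine Finset.sum_bij (fun p _ => w :: p.2) ?_ ?_ ?_ ?_
  · rintro ⟨u, l⟩ hl
    obtain ⟨hnodup, hQ, hhead, hlast⟩ := mem_pathsBetween.1 (Finset.mem_sigma.1 hl).2
    obtain ⟨l, rfl : _ = u :: l⟩ := List.head?_eq_some_iff.1 hhead
    obtain ⟨hnodup', hP⟩ := (h u l hlast).2 ⟨hnodup, hQ⟩
    exact mem_pathsBetween.2 ⟨hnodup', hP, rfl, by rwa [List.getLast?_cons_cons]⟩
  · rintro ⟨u, l⟩ hl ⟨u', l'⟩ hl' hcons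
    obtain rfl := (List.cons.inj hcons).2
    have hu := (mem_pathsBetween.1 (Finset.mem_sigma.1 hl).2).2.2.1
    have hu' := (mem_pathsBetween.1 (Finset.mem_sigma.1 hl').2).2.2.1
    obtain rfl := Option.some.inj (hu.symm.trans hu')
    rfl
  · intro l hl
    obtain ⟨hnodup, hP, hhead, hlast⟩ := mem_pathsBetween.1 hl
    obtain ⟨l, rfl⟩ := List.head?_eq_some_iff.1 hhead
    cases l with
    | nil => exact absurd (by simpa using hlast) hwv
    | cons u l =>
      rw [List.getLast?_cons_cons] at hlast
      obtain ⟨hnodup', hQ⟩ := (h u l hlast).1 ⟨hnodup, hP⟩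
      exact ⟨⟨u, u :: l⟩, by simp [mem_pathsBetween, hnodup', hQ, hlast], rfl⟩
  · rintro ⟨u, l⟩ hl
    obtain ⟨l, rfl : _ = u :: l⟩ :=
      List.head?_eq_some_iff.1 (mem_pathsBetween.1 (Finset.mem_sigma.1 hl).2).2.2.1
    exact (walkWeight_cons_cons w u l).symm

theorem reflTransGen_of_mem_of_isChain {V : Type*} {r : V → V → Prop} {l : List V} {v x : V}
    (h : l.IsChain r) (hv : l.getLast? = some v) (hx : x ∈ l) : Relation.ReflTransGen r x v :=
  h.backwards_induction (Relation.ReflTransGen r · v) l (fun _ _ hr hy => hy.head hr)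
    (fun hne => by rw [List.getLast_of_getLast?_eq_some hv]) x hx

theorem eq_zero_of_transpose_mul_diagonal_mul_apply_self_eq_zero {V R : Type*} [Fintype V]
    [DecidableEq V] [Semiring R] {r : V → V → Prop} (hr : WellFounded r) {P : Matrix V V R}
    (hP : ∀ v, P v v = 1) (hPr : ∀ u v, u ≠ v → ¬ r u v → P u v = 0) {d : V → R}
    (h : ∀ v, (Pᵀ * diagonal d * P) v v = 0) : d = 0 := by
  ext v
  induction v using hr.induction with
  | _ v ih =>
    have hv := h v
    rw [Matrix.mul_apply] at hv
    simp only [mul_diagonal, transpose_apply] at hv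
    rw [Finset.sum_eq_single v] at hv
    · simpa [hP v] using hv
    · intro u _ huv
      by_cases hru : r u v
      · simp [ih u hru]
      · simp [hPr u v huv hru]
    · simp

theorem diagonal_mul_diagonal_inv {V K : Type*} [Fintype V] [DecidableEq V] [DivisionRing K]
    {e : V → K} (he : ∀ v, e v ≠ 0) : diagonal e * diagonal e⁻¹ = 1 := by
  rw [diagonal_mul_diagonal, ← diagonal_one]
  exact congrArg diagonal (funext fun v => mul_inv_cancel₀ (he v))

theorem exists_diagonal_mul_mul_diagonal_apply_self_eq_one {V : Type*} [Fintype V] [DecidableEq V]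
    {S : Matrix V V ℝ} (hS : ∀ v, 0 < S v v) :
    ∃ d : V → ℝ, (∀ v, d v ≠ 0) ∧ ∀ v, (diagonal d⁻¹ * S * diagonal d⁻¹) v v = 1 := by
  have hsqrt (v : V) : √(S v v) ≠ 0 := (Real.sqrt_pos.2 (hS v)).ne'
  refine ⟨fun v => √(S v v), hsqrt, fun v => ?_⟩
  rw [mul_diagonal, diagonal_mul, Pi.inv_apply, ← div_eq_inv_mul, ← div_eq_mul_inv,
    div_div, Real.mul_self_sqrt (hS v).le, div_self (hS v).ne']

theorem posDef_diagonal_mul_mul_diagonal_iff {V : Type*} [Fintype V] [DecidableEq V]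
    {S : Matrix V V ℝ} {e : V → ℝ} (he : ∀ v, e v ≠ 0) :
    (diagonal e * S * diagonal e).PosDef ↔ S.PosDef := by
  have hunit : IsUnit (diagonal e) := isUnit_diagonal.2 (Pi.isUnit_iff.2 fun v => (he v).isUnit)
  have hstar : star (diagonal e) = diagonal e := by
    rw [star_eq_conjTranspose, diagonal_conjTranspose, star_trivial]
  simpa only [hstar] using hunit.posDef_star_left_conjugate_iff (x := S)

namespace MixedGraph

open Relation

section Treks

variable {V : Type*} {G : MixedGraph V}

theorem B_comm {v w : V} : G.B v w ↔ G.B w v :=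
  ⟨G.symm v w, G.symm w v⟩

theorem adj.symm {v w : V} (h : G.adj v w) : G.adj w v := by
  obtain ⟨hne, h | h | h⟩ := h
  · exact ⟨hne.symm, .inr (.inl h)⟩
  · exact ⟨hne.symm, .inl h⟩
  · exact ⟨hne.symm, .inr (.inr (B_comm.1 h))⟩

theorem ColliderTriple.symm {u v w : V} (h : G.ColliderTriple u v w) :
    G.ColliderTriple w v u := by
  obtain ⟨huv, hvw, huw, hu, hw⟩ := h
  exact ⟨hvw.symm, huv.symm, huw.symm, hw, hu⟩

theorem Acyclic.ne_of_D (hG : G.Acyclic) {v w : V} (h : G.D v w) : v ≠ w := by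
  rintro rfl
  exact hG v (.single h)

theorem Acyclic.not_reflTransGen_or (hG : G.Acyclic) {v w : V} (h : v ≠ w) :
    ¬ ReflTransGen G.D v w ∨ ¬ ReflTransGen G.D w v := by
  by_contra! hc
  have hvw : TransGen G.D v w := (reflTransGen_iff_eq_or_transGen.1 hc.1).resolve_left h.symm
  exact hG v (hvw.trans_left hc.2)

theorem Acyclic.wellFounded_transGen [Finite V] (hG : G.Acyclic) : WellFounded (TransGen G.D) :=
  haveI : Std.Irrefl (TransGen G.D) := ⟨hG⟩
  Finite.wellFounded_of_trans_of_irrefl _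

theorem Acyclic.nodup_of_isChain (hG : G.Acyclic) {l : List V} (h : l.IsChain G.D) : l.Nodup := by
  have h' : l.IsChain (TransGen G.D) := h.imp fun _ _ => .single
  refine h'.pairwise.imp fun {x y} hxy => ?_
  rintro rfl
  exact hG x hxy

theorem IsBAP.not_B_of_D (hG : G.IsBAP) {v w : V} (h : G.D v w) : ¬ G.B v w :=
  fun hB => (hG.2 v w (hG.1.ne_of_D h)).2.1 ⟨h, hB⟩

theorem IsBAP.not_colliderTriple_of_D (hG : G.IsBAP) {u v w : V} (h : G.D v u) :
    ¬ G.ColliderTriple u v w := by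
  rintro ⟨-, -, -, hD | hB, -⟩
  · exact hG.1 v (.tail (.single h) hD)
  · exact hG.not_B_of_D h (B_comm.1 hB)

/-- A trek, given as the list of its vertices: a path without colliders. -/
def IsTrek (G : MixedGraph V) (l : List V) : Prop :=
  l.Nodup ∧ l.IsChain G.adj ∧ ∀ x y z, [x, y, z] <:+: l → ¬ G.ColliderTriple x y z

theorem isTrek_singleton (x : V) : G.IsTrek [x] := by
  refine ⟨List.nodup_singleton x, .singleton x, fun u v w h => ?_⟩
  simpa using h.length_le

theorem isTrek_cons_cons {x y : V} {l : List V} :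
    G.IsTrek (x :: y :: l) ↔ x ∉ y :: l ∧ G.adj x y ∧
      (∀ z ∈ l.head?, ¬ G.ColliderTriple x y z) ∧ G.IsTrek (y :: l) := by
  have hinfix : (∀ u v w, [u, v, w] <:+: x :: y :: l → ¬ G.ColliderTriple u v w) ↔
      (∀ z ∈ l.head?, ¬ G.ColliderTriple x y z) ∧
        ∀ u v w, [u, v, w] <:+: y :: l → ¬ G.ColliderTriple u v w := by
    simp only [List.infix_cons_iff (l₂ := y :: l)]
    cases l with
    | nil => simp
    | cons z l => simp +contextual [or_imp, forall_and, iff_def]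
  simp only [IsTrek, hinfix, List.nodup_cons (a := x), List.isChain_cons_cons]
  tauto

theorem IsTrek.reverse {l : List V} (h : G.IsTrek l) : G.IsTrek l.reverse := by
  obtain ⟨hnodup, hchain, hcollider⟩ := h
  refine ⟨List.nodup_reverse.2 hnodup, List.isChain_reverse.2 (hchain.imp fun _ _ => adj.symm), ?_⟩
  intro x y z hxyz hc
  exact hcollider z y x (by simpa using List.reverse_infix.2 hxyz) hc.symm

theorem IsBAP.isTrek_of_isChain (hG : G.IsBAP) {l : List V} (h : l.IsChain G.D) : G.IsTrek l := by
  refine ⟨hG.1.nodup_of_isChain h, h.imp fun _ _ hxy => ⟨hG.1.ne_of_D hxy, .inl hxy⟩, ?_⟩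
  intro x y z hxyz hc
  have hyz : G.D y z := by simpa using (h.infix hxyz).tail
  exact hG.not_colliderTriple_of_D hyz hc.symm

theorem IsTrek.isChain_of_arrowhead {x y : V} {l : List V} (h : G.IsTrek (x :: y :: l))
    (hxy : G.D x y ∨ G.B x y) : (y :: l).IsChain G.D := by
  induction l generalizing x y with
  | nil => exact .singleton y
  | cons z l ih =>
    obtain ⟨hx, hadj, hc, htail⟩ := isTrek_cons_cons.1 h
    obtain ⟨-, ⟨hne, hyz⟩, -, -⟩ := isTrek_cons_cons.1 htail
    have hxz : x ≠ z := fun hxz => hx (by simp [hxz])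
    have no_arrowhead : ¬ (G.D z y ∨ G.B z y) :=
      fun hzy => hc z rfl ⟨hadj.1, hne, hxz, hxy, hzy⟩
    have hD : G.D y z := by
      rw [B_comm] at hyz
      tauto
    exact List.isChain_cons_cons.2 ⟨hD, ih htail (.inl hD)⟩

theorem IsTrek.reflTransGen_head_or_last {u v x : V} {l : List V} (h : G.IsTrek (u :: l))
    (hv : (u :: l).getLast? = some v) (hx : x ∈ u :: l) :
    ReflTransGen G.D x u ∨ ReflTransGen G.D x v := by
  induction l generalizing u with
  | nil => exact .inl (by rw [List.mem_singleton.1 hx])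
  | cons z l ih =>
    rcases List.mem_cons.1 hx with rfl | hx
    · exact .inl .refl
    rw [List.getLast?_cons_cons] at hv
    obtain ⟨-, ⟨-, hadj⟩, -, htail⟩ := isTrek_cons_cons.1 h
    have of_arrowhead (huz : G.D u z ∨ G.B u z) : ReflTransGen G.D x v :=
      reflTransGen_of_mem_of_isChain (h.isChain_of_arrowhead huz) hv hx
    rcases hadj with hD | hD | hB
    · exact .inr (of_arrowhead (.inl hD))
    · exact (ih htail hv hx).imp_left fun hxz => hxz.tail hD
    · exact .inr (of_arrowhead (.inr hB))

theorem IsBAP.isTrek_cons_cons_iff (hG : G.IsBAP) {w u v : V} {l : List V}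
    (hv : (u :: l).getLast? = some v) (hwv : ¬ ReflTransGen G.D w v) :
    G.IsTrek (w :: u :: l) ↔
      (G.D u w ∧ G.IsTrek (u :: l)) ∨ (G.B w u ∧ (u :: l).IsChain G.D) := by
  refine ⟨fun h => ?_, ?_⟩
  · obtain ⟨-, ⟨-, hadj⟩, -, htail⟩ := isTrek_cons_cons.1 h
    rcases hadj with hD | hD | hB
    · have huv : ReflTransGen G.D u v := reflTransGen_of_mem_of_isChain
        (h.isChain_of_arrowhead (.inl hD)) hv List.mem_cons_self
      exact absurd (huv.head hD) hwv
    · exact .inl ⟨hD, htail⟩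
    · exact .inr ⟨hB, h.isChain_of_arrowhead (.inr hB)⟩
  · rintro (⟨hD, htrek⟩ | ⟨hB, hchain⟩)
    · have hw : w ∉ u :: l := fun hw =>
        (htrek.reflTransGen_head_or_last hv hw).elim (fun hwu => hG.1 w (.tail' hwu hD)) hwv
      exact isTrek_cons_cons.2 ⟨hw, ⟨(hG.1.ne_of_D hD).symm, .inr (.inl hD)⟩,
        fun _ _ => hG.not_colliderTriple_of_D hD, htrek⟩
    · have hw : w ∉ u :: l := fun hw => hwv (reflTransGen_of_mem_of_isChain hchain hv hw)
      have hne : w ≠ u := fun hwu => hw (by simp [hwu])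
      refine isTrek_cons_cons.2 ⟨hw, ⟨hne, .inr (.inr hB)⟩, fun z hz hc => ?_,
        hG.isTrek_of_isChain hchain⟩
      exact hG.not_colliderTriple_of_D ((List.isChain_cons.1 hchain).1 z hz) hc.symm

theorem isTrek_congr {G' : MixedGraph V} (hskel : ∀ v w, G.adj v w ↔ G'.adj v w)
    (hcoll : ∀ u v w, G.ColliderTriple u v w ↔ G'.ColliderTriple u v w) :
    G.IsTrek = G'.IsTrek := by
  have hadj : G.adj = G'.adj := by
    ext v w
    exact hskel v w
  ext l
  simp only [IsTrek, hadj, hcoll]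

end Treks

section EdgeWeights

variable {V R : Type*} {G : MixedGraph V}

open Classical in
/-- The weights of the directed edges: the matrix `Λ` of a weighted graph. -/
noncomputable def directedPart [Zero R] (G : MixedGraph V) (a : Matrix V V R) : Matrix V V R :=
  of fun v w => if G.D v w then a v w else 0

open Classical in
/-- The weights of the bidirected edges: the matrix `Ω` of a weighted graph, off the diagonal. -/
noncomputable def bidirectedPart [Zero R] (G : MixedGraph V) (a : Matrix V V R) : Matrix V V R :=
  of fun v w => if G.B v w then a v w else 0

section Zero

variable [Zero R] {a : Matrix V V R} {v w : V}

theorem directedPart_apply_of_D (h : G.D v w) : G.directedPart a v w = a v w := by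
  simp [directedPart, h]

theorem directedPart_apply_of_not_D (h : ¬ G.D v w) : G.directedPart a v w = 0 := by
  simp [directedPart, h]

theorem bidirectedPart_apply_of_B (h : G.B v w) : G.bidirectedPart a v w = a v w := by
  simp [bidirectedPart, h]

theorem bidirectedPart_apply_of_not_B (h : ¬ G.B v w) : G.bidirectedPart a v w = 0 := by
  simp [bidirectedPart, h]

theorem isSymm_bidirectedPart (ha : a.IsSymm) : (G.bidirectedPart a).IsSymm := by
  refine .ext fun v w => ?_
  by_cases hB : G.B v w
  · rw [bidirectedPart_apply_of_B hB, bidirectedPart_apply_of_B (B_comm.1 hB), ha.apply]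
  · rw [bidirectedPart_apply_of_not_B hB, bidirectedPart_apply_of_not_B (mt B_comm.1 hB)]

end Zero

theorem LamCompat.directedPart_eq {Λ : Matrix V V ℝ} (h : G.LamCompat Λ) :
    G.directedPart Λ = Λ := by
  ext v w
  by_cases hD : G.D v w
  · rw [directedPart_apply_of_D hD]
  · rw [directedPart_apply_of_not_D hD, h v w hD]

theorem IsBAP.exists_isSymm_directedPart_bidirectedPart_eq [AddCommMonoid R] (hG : G.IsBAP)
    (Λ : Matrix V V R) {Ω : Matrix V V R} (hΩ : Ω.IsSymm) :
    ∃ a : Matrix V V R, a.IsSymm ∧ G.directedPart a = G.directedPart Λ ∧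
      G.bidirectedPart a = G.bidirectedPart Ω := by
  refine ⟨G.directedPart Λ + (G.directedPart Λ)ᵀ + G.bidirectedPart Ω,
    .add (isSymm_add_transpose_self _) (isSymm_bidirectedPart hΩ), ?_, ?_⟩
  · ext v w
    by_cases hD : G.D v w
    · have hD' : ¬ G.D w v := fun hD' => hG.1 v (.tail (.single hD) hD')
      simp [directedPart, bidirectedPart, hD, hD', hG.not_B_of_D hD]
    · simp [directedPart, hD]
  · ext v w
    by_cases hB : G.B v w
    · have hD : ¬ G.D v w := fun hD => hG.not_B_of_D hD hB
      have hD' : ¬ G.D w v := fun hD' => hG.not_B_of_D hD' (B_comm.1 hB)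
      simp [directedPart, bidirectedPart, hB, hD, hD']
    · simp [bidirectedPart, hB]

end EdgeWeights

section PathRule

variable {V R : Type*} {G : MixedGraph V}

section TotalWeights

variable [Finite V] [Semiring R] {a : Matrix V V R}

/-- The total weights of the treks between two vertices, the right-hand sides of Wright's path
rule. -/
noncomputable def trekSum (G : MixedGraph V) (a : Matrix V V R) : Matrix V V R :=
  pathSum G.IsTrek a

/-- The total weights of the directed paths from one vertex to another; for acyclic graphs this is
the inverse of `1 - Λ`, where `Λ` consists of the weights of the directed edges. -/
noncomputable def directedSum (G : MixedGraph V) (a : Matrix V V R) : Matrix V V R :=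
  pathSum (·.IsChain G.D) a

theorem trekSum_apply_self (v : V) : G.trekSum a v v = 1 :=
  pathSum_apply_self (isTrek_singleton v)

theorem isSymm_trekSum {R : Type*} [CommSemiring R] {a : Matrix V V R} (ha : a.IsSymm) :
    (G.trekSum a).IsSymm :=
  isSymm_pathSum ha fun _ => IsTrek.reverse

theorem directedSum_apply_self (v : V) : G.directedSum a v v = 1 :=
  pathSum_apply_self (.singleton v)

theorem directedSum_apply_eq_zero {w v : V} (h : ¬ ReflTransGen G.D w v) :
    G.directedSum a w v = 0 := by
  refine Finset.sum_eq_zero fun l hl => ?_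
  obtain ⟨-, hchain, hhead, hlast⟩ := mem_pathsBetween.1 hl
  exact absurd (reflTransGen_of_mem_of_isChain hchain hlast (List.mem_of_head? hhead)) h

theorem trekSum_congr {G' : MixedGraph V} (hskel : ∀ v w, G.adj v w ↔ G'.adj v w)
    (hcoll : ∀ u v w, G.ColliderTriple u v w ↔ G'.ColliderTriple u v w) :
    G.trekSum a = G'.trekSum a := by
  rw [trekSum, trekSum, isTrek_congr hskel hcoll]

end TotalWeights

variable [Fintype V]

section FirstStep

variable [Semiring R] {a : Matrix V V R}

theorem Acyclic.directedSum_apply (hG : G.Acyclic) {w v : V} (hwv : w ≠ v) :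
    G.directedSum a w v = (G.directedPart a * G.directedSum a) w v := by
  have hcons (u : V) (l : List V) (_ : (u :: l).getLast? = some v) :
      (w :: u :: l).Nodup ∧ (w :: u :: l).IsChain G.D ↔
        (u :: l).Nodup ∧ (G.D w u ∧ (u :: l).IsChain G.D) := by
    rw [and_iff_right_of_imp hG.nodup_of_isChain, List.isChain_cons_cons,
      and_iff_right_of_imp fun h => hG.nodup_of_isChain h.2]
  rw [directedSum, pathSum_apply_eq_sum_cons (Q := fun u l => G.D w u ∧ l.IsChain G.D) hwv hcons,
    Matrix.mul_apply]
  refine Finset.sum_congr rfl fun u _ => ?_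
  by_cases hu : G.D w u <;> simp [directedPart, hu, pathSum_false]

theorem IsBAP.trekSum_apply (hG : G.IsBAP) (ha : a.IsSymm) {w v : V}
    (hwv : ¬ ReflTransGen G.D w v) :
    G.trekSum a w v =
      ((G.directedPart a)ᵀ * G.trekSum a + G.bidirectedPart a * G.directedSum a) w v := by
  have hcons (u : V) (l : List V) (hv : (u :: l).getLast? = some v) :
      (w :: u :: l).Nodup ∧ G.IsTrek (w :: u :: l) ↔ (u :: l).Nodup ∧
        (G.D u w ∧ G.IsTrek (u :: l) ∨ G.B w u ∧ (u :: l).IsChain G.D) := by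
    have nodup_of_isTrek {l : List V} (h : G.IsTrek l) : l.Nodup := h.1
    rw [and_iff_right_of_imp nodup_of_isTrek, hG.isTrek_cons_cons_iff hv hwv,
      and_iff_right_of_imp
        (Or.rec (nodup_of_isTrek ·.2) (hG.1.nodup_of_isChain ·.2))]
  have hne : w ≠ v := fun h => hwv (h ▸ .refl)
  rw [trekSum, pathSum_apply_eq_sum_cons
    (Q := fun u l => G.D u w ∧ G.IsTrek l ∨ G.B w u ∧ l.IsChain G.D) hne hcons,
    Matrix.add_apply, Matrix.mul_apply, Matrix.mul_apply, ← Finset.sum_add_distrib]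
  refine Finset.sum_congr rfl fun u _ => ?_
  by_cases hD : G.D u w
  · have hB : ¬ G.B w u := fun hB => hG.not_B_of_D hD (B_comm.1 hB)
    simp [directedPart, bidirectedPart, hD, hB, ha.apply u w]
  · by_cases hB : G.B w u <;>
      simp [directedPart, bidirectedPart, directedSum, hD, hB, pathSum_false]

end FirstStep

theorem Acyclic.one_sub_directedPart_mul_directedSum [DecidableEq V] [Ring R] (hG : G.Acyclic)
    (a : Matrix V V R) :
    (1 - G.directedPart a) * G.directedSum a = 1 := by
  ext w v
  rw [sub_mul, one_mul, Matrix.sub_apply]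
  by_cases hwv : w = v
  · subst hwv
    have no_cycle : (G.directedPart a * G.directedSum a) w w = 0 := by
      rw [Matrix.mul_apply]
      refine Finset.sum_eq_zero fun u _ => ?_
      by_cases hu : G.D w u
      · rw [directedSum_apply_eq_zero fun huw => hG w (.head' hu huw), mul_zero]
      · rw [directedPart_apply_of_not_D hu, zero_mul]
    rw [no_cycle, sub_zero, directedSum_apply_self, Matrix.one_apply_eq]
  · rw [← hG.directedSum_apply hwv, sub_self, Matrix.one_apply_ne hwv]

variable [DecidableEq V] [CommRing R] {a : Matrix V V R}

/-- The covariance matrix of the errors `x - Λᵀ x` of a random vector `x` with covariance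
matrix `S`. -/
def errorCov (Λ S : Matrix V V R) : Matrix V V R :=
  (1 - Λ)ᵀ * S * (1 - Λ)

theorem isSymm_errorCov {Λ S : Matrix V V R} (hS : S.IsSymm) : (errorCov Λ S).IsSymm := by
  simp [IsSymm, errorCov, transpose_mul, hS.eq, mul_assoc]

theorem errorCov_eq_iff {Λ S Ω : Matrix V V R} (hΛ : IsUnit (1 - Λ)) :
    errorCov Λ S = Ω ↔ S = ((1 - Λ)⁻¹)ᵀ * Ω * (1 - Λ)⁻¹ := by
  have hdet := (isUnit_iff_isUnit_det _).1 hΛ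
  have hleft : (1 - Λ)⁻¹ * (1 - Λ) = 1 := nonsing_inv_mul _ hdet
  have hright : (1 - Λ) * (1 - Λ)⁻¹ = 1 := mul_nonsing_inv _ hdet
  constructor
  · rintro rfl
    calc S = ((1 - Λ) * (1 - Λ)⁻¹)ᵀ * S * ((1 - Λ) * (1 - Λ)⁻¹) := by
          rw [hright, transpose_one, one_mul, mul_one]
      _ = ((1 - Λ)⁻¹)ᵀ * errorCov Λ S * (1 - Λ)⁻¹ := by
          simp only [errorCov, transpose_mul, mul_assoc]
  · rintro rfl
    calc errorCov Λ (((1 - Λ)⁻¹)ᵀ * Ω * (1 - Λ)⁻¹)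
        = ((1 - Λ)⁻¹ * (1 - Λ))ᵀ * Ω * ((1 - Λ)⁻¹ * (1 - Λ)) := by
          simp only [errorCov, transpose_mul, mul_assoc]
      _ = Ω := by rw [hleft, transpose_one, one_mul, mul_one]

theorem Acyclic.directedSum_transpose_mul_errorCov_mul_directedSum (hG : G.Acyclic)
    (a S : Matrix V V R) :
    (G.directedSum a)ᵀ * errorCov (G.directedPart a) S * G.directedSum a = S := by
  have hinv := hG.one_sub_directedPart_mul_directedSum a
  calc (G.directedSum a)ᵀ * errorCov (G.directedPart a) S * G.directedSum a
      = ((1 - G.directedPart a) * G.directedSum a)ᵀ * S *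
          ((1 - G.directedPart a) * G.directedSum a) := by
        simp only [errorCov, transpose_mul, mul_assoc]
    _ = S := by rw [hinv, transpose_one, one_mul, mul_one]

theorem IsBAP.errorCov_trekSum_apply_of_not_reflTransGen (hG : G.IsBAP) (ha : a.IsSymm) {w v : V}
    (hwv : ¬ ReflTransGen G.D w v) :
    errorCov (G.directedPart a) (G.trekSum a) w v = G.bidirectedPart a w v := by
  have hrow {x : V} (hwx : ¬ ReflTransGen G.D w x) :
      ((1 - G.directedPart a)ᵀ * G.trekSum a : Matrix V V R) w x =
        (G.bidirectedPart a * G.directedSum a : Matrix V V R) w x := by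
    rw [transpose_sub, transpose_one, sub_mul, one_mul, Matrix.sub_apply,
      hG.trekSum_apply ha hwx, Matrix.add_apply, add_sub_cancel_left]
  have hB : G.bidirectedPart a * G.directedSum a * (1 - G.directedPart a) =
      G.bidirectedPart a := by
    rw [mul_assoc, mul_eq_one_comm.1 (hG.1.one_sub_directedPart_mul_directedSum a), mul_one]
  rw [← hB, errorCov, Matrix.mul_apply, Matrix.mul_apply]
  refine Finset.sum_congr rfl fun x _ => ?_
  -- Column `v` of `1 - Λ` is supported on `v` and its parents, none of which descends from `w`.
  by_cases hwx : ReflTransGen G.D w x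
  · have hne : x ≠ v := fun hxv => hwv (hxv ▸ hwx)
    have hD : ¬ G.D x v := fun hD => hwv (hwx.tail hD)
    simp [directedPart_apply_of_not_D hD, hne]
  · rw [hrow hwx]

theorem IsBAP.errorCov_trekSum_apply (hG : G.IsBAP) (ha : a.IsSymm) {w v : V} (hwv : w ≠ v) :
    errorCov (G.directedPart a) (G.trekSum a) w v = G.bidirectedPart a w v := by
  rcases hG.1.not_reflTransGen_or hwv with h | h
  · exact hG.errorCov_trekSum_apply_of_not_reflTransGen ha h
  · rw [← (isSymm_errorCov (isSymm_trekSum ha)).apply w v,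
      hG.errorCov_trekSum_apply_of_not_reflTransGen ha h, (isSymm_bidirectedPart ha).apply]

theorem Acyclic.eq_of_errorCov_apply_eq (hG : G.Acyclic) {S T : Matrix V V R}
    (hdiag : ∀ v, S v v = T v v)
    (h : ∀ w v, w ≠ v →
      errorCov (G.directedPart a) S w v = errorCov (G.directedPart a) T w v) : S = T := by
  have herror : errorCov (G.directedPart a) (S - T) =
      errorCov (G.directedPart a) S - errorCov (G.directedPart a) T := by
    rw [errorCov, errorCov, errorCov, Matrix.mul_sub _ S T, Matrix.sub_mul]
  have herror_diag : (errorCov (G.directedPart a) (S - T)).IsDiag := by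
    intro w v hwv
    rw [herror, Matrix.sub_apply, h w v hwv, sub_self]
  have hST := hG.directedSum_transpose_mul_errorCov_mul_directedSum a (S - T)
  rw [← herror_diag.diagonal_diag] at hST
  have hd : (errorCov (G.directedPart a) (S - T)).diag = 0 := by
    refine eq_zero_of_transpose_mul_diagonal_mul_apply_self_eq_zero hG.wellFounded_transGen
      (P := G.directedSum a) directedSum_apply_self (fun u v huv hD => ?_) fun v => ?_
    · refine directedSum_apply_eq_zero fun h => ?_
      exact (reflTransGen_iff_eq_or_transGen.1 h).elim (huv ·.symm) hD
    · rw [hST, Matrix.sub_apply, hdiag, sub_self]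
  rw [hd, diagonal_zero', mul_zero, zero_mul] at hST
  exact sub_eq_zero.1 hST.symm

/-- Wright's path rule. -/
theorem IsBAP.exists_eq_trekSum (hG : G.IsBAP) {Λ S : Matrix V V R}
    (hΛ : G.directedPart Λ = Λ) (hS : S.IsSymm)
    (hΩ : ∀ v w, v ≠ w → ¬ G.B v w → errorCov Λ S v w = 0) (hdiag : ∀ v, S v v = 1) :
    ∃ a : Matrix V V R, a.IsSymm ∧ S = G.trekSum a := by
  obtain ⟨a, ha, haΛ, haΩ⟩ :=
    hG.exists_isSymm_directedPart_bidirectedPart_eq Λ (isSymm_errorCov hS (Λ := Λ))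
  refine ⟨a, ha, hG.1.eq_of_errorCov_apply_eq (a := a) (fun v => ?_) fun w v hwv => ?_⟩
  · rw [hdiag, trekSum_apply_self]
  · rw [hG.errorCov_trekSum_apply ha hwv, haΩ, haΛ, hΛ]
    by_cases hB : G.B w v
    · rw [bidirectedPart_apply_of_B hB]
    · rw [bidirectedPart_apply_of_not_B hB, hΩ w v hwv hB]

end PathRule

section Model

variable {V : Type*} [Fintype V] [DecidableEq V] {G : MixedGraph V}

theorem LamCompat.isUnit_one_sub (hG : G.Acyclic) {Λ : Matrix V V ℝ} (h : G.LamCompat Λ) :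
    IsUnit (1 - Λ) :=
  h.directedPart_eq ▸ .of_mul_eq_one _ (hG.one_sub_directedPart_mul_directedSum Λ)

theorem posDef_errorCov_iff {Λ S : Matrix V V ℝ} (hΛ : IsUnit (1 - Λ)) :
    (errorCov Λ S).PosDef ↔ S.PosDef :=
  hΛ.posDef_star_left_conjugate_iff

theorem mem_model_iff_errorCov (hG : G.Acyclic) {S : Matrix V V ℝ} :
    S ∈ G.model ↔ S.PosDef ∧ ∃ Λ, G.LamCompat Λ ∧
      ∀ v w, v ≠ w → ¬ G.B v w → errorCov Λ S v w = 0 := by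
  constructor
  · rintro ⟨Λ, Ω, hΛ, ⟨hpos, hΩ⟩, hS⟩
    have hunit := hΛ.isUnit_one_sub hG
    obtain rfl := (errorCov_eq_iff hunit).2 hS
    exact ⟨(posDef_errorCov_iff hunit).1 hpos, Λ, hΛ,
      fun v w hvw hB => hΩ v w hvw hB (mt B_comm.1 hB)⟩
  · rintro ⟨hpos, Λ, hΛ, hΩ⟩
    have hunit := hΛ.isUnit_one_sub hG
    exact ⟨Λ, errorCov Λ S, hΛ, ⟨(posDef_errorCov_iff hunit).2 hpos,
      fun v w hvw hB _ => hΩ v w hvw hB⟩, (errorCov_eq_iff hunit).1 rfl⟩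

theorem errorCov_diagonal_mul_mul_diagonal {K : Type*} [Field K] (Λ S : Matrix V V K) {e : V → K}
    (he : ∀ v, e v ≠ 0) :
    errorCov (diagonal e⁻¹ * Λ * diagonal e) (diagonal e * S * diagonal e) =
      diagonal e * errorCov Λ S * diagonal e := by
  have hinv := diagonal_mul_diagonal_inv he
  have hcomm : diagonal e * (1 - diagonal e⁻¹ * Λ * diagonal e) = (1 - Λ) * diagonal e := by
    rw [mul_sub, mul_one, mul_assoc, ← mul_assoc, hinv, one_mul, sub_mul, one_mul]
  have hcomm' := congrArg transpose hcomm
  rw [transpose_mul, transpose_mul, diagonal_transpose] at hcomm'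
  calc errorCov (diagonal e⁻¹ * Λ * diagonal e) (diagonal e * S * diagonal e)
      = ((1 - diagonal e⁻¹ * Λ * diagonal e)ᵀ * diagonal e) * S *
          (diagonal e * (1 - diagonal e⁻¹ * Λ * diagonal e)) := by
        simp only [errorCov, mul_assoc]
    _ = diagonal e * errorCov Λ S * diagonal e := by
        rw [hcomm, hcomm']
        simp only [errorCov, mul_assoc]

theorem Acyclic.diagonal_mul_mul_diagonal_mem_model (hG : G.Acyclic) {S : Matrix V V ℝ}
    (hS : S ∈ G.model) {e : V → ℝ} (he : ∀ v, e v ≠ 0) :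
    diagonal e * S * diagonal e ∈ G.model := by
  rw [mem_model_iff_errorCov hG] at hS ⊢
  obtain ⟨hpos, Λ, hΛ, hΩ⟩ := hS
  refine ⟨(posDef_diagonal_mul_mul_diagonal_iff he).2 hpos, diagonal e⁻¹ * Λ * diagonal e,
    fun v w hD => ?_, fun v w hvw hB => ?_⟩
  · simp [hΛ v w hD]
  · simp [errorCov_diagonal_mul_mul_diagonal Λ S he, hΩ v w hvw hB]

theorem IsBAP.exists_eq_trekSum_of_mem_model (hG : G.IsBAP) {S : Matrix V V ℝ} (hS : S ∈ G.model)
    (hdiag : ∀ v, S v v = 1) : ∃ a : Matrix V V ℝ, a.IsSymm ∧ S = G.trekSum a := by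
  obtain ⟨hpos, Λ, hΛ, hΩ⟩ := (mem_model_iff_errorCov hG.1).1 hS
  have hsymm : S.IsSymm := (conjTranspose_eq_transpose_of_trivial S).symm.trans hpos.isHermitian
  exact hG.exists_eq_trekSum hΛ.directedPart_eq hsymm hΩ hdiag

theorem IsBAP.trekSum_mem_model (hG : G.IsBAP) {a : Matrix V V ℝ} (ha : a.IsSymm)
    (hpos : (G.trekSum a).PosDef) : G.trekSum a ∈ G.model := by
  refine (mem_model_iff_errorCov hG.1).2
    ⟨hpos, G.directedPart a, fun v w hD => directedPart_apply_of_not_D hD, fun v w hvw hB => ?_⟩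
  rw [hG.errorCov_trekSum_apply ha hvw, bidirectedPart_apply_of_not_B hB]

theorem IsBAP.mem_model_iff_trekSum (hG : G.IsBAP) {S : Matrix V V ℝ} :
    S ∈ G.model ↔ S.PosDef ∧ ∃ (d : V → ℝ) (a : Matrix V V ℝ), (∀ v, d v ≠ 0) ∧ a.IsSymm ∧
      S = diagonal d * G.trekSum a * diagonal d := by
  constructor
  · intro hS
    have hpos := ((mem_model_iff_errorCov hG.1).1 hS).1
    obtain ⟨d, hd, hdiag⟩ :=
      exists_diagonal_mul_mul_diagonal_apply_self_eq_one fun v => hpos.diag_pos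
    have hinv : diagonal d * diagonal d⁻¹ = 1 := diagonal_mul_diagonal_inv hd
    have hinv' := mul_eq_one_comm.1 hinv
    have hS' : diagonal d⁻¹ * S * diagonal d⁻¹ ∈ G.model :=
      hG.1.diagonal_mul_mul_diagonal_mem_model hS fun v => inv_ne_zero (hd v)
    obtain ⟨a, ha, hSa⟩ := hG.exists_eq_trekSum_of_mem_model hS' hdiag
    refine ⟨hpos, d, a, hd, ha, ?_⟩
    calc S = diagonal d * diagonal d⁻¹ * S * (diagonal d⁻¹ * diagonal d) := by
          rw [hinv, hinv', one_mul, mul_one]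
      _ = diagonal d * (diagonal d⁻¹ * S * diagonal d⁻¹) * diagonal d := by
          simp only [mul_assoc]
      _ = diagonal d * G.trekSum a * diagonal d := by rw [hSa]
  · rintro ⟨hpos, d, a, hd, ha, rfl⟩
    rw [posDef_diagonal_mul_mul_diagonal_iff hd] at hpos
    exact hG.1.diagonal_mul_mul_diagonal_mem_model (hG.trekSum_mem_model ha hpos) hd

theorem IsBAP.model_eq {G' : MixedGraph V} (hG : G.IsBAP) (hG' : G'.IsBAP)
    (hskel : ∀ v w, G.adj v w ↔ G'.adj v w)
    (hcoll : ∀ u v w, G.ColliderTriple u v w ↔ G'.ColliderTriple u v w) :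
    G.model = G'.model := by
  ext S
  simp only [hG.mem_model_iff_trekSum, hG'.mem_model_iff_trekSum, trekSum_congr hskel hcoll]

end Model

end MixedGraph

/-- Theorem 6: If two BAPs have the same skeleton and the same
collider triples, they are algebraically equivalent. -/
theorem algModel_eq_of_skeleton_and_colliderTriples_eq
    {V : Type*} [Fintype V] [DecidableEq V]
    (G G' : MixedGraph V) (hG : G.IsBAP) (hG' : G'.IsBAP)
    (hskel : ∀ v w, G.adj v w ↔ G'.adj v w)
    (hcoll : ∀ u v w, G.ColliderTriple u v w ↔ G'.ColliderTriple u v w) :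
    G.algModel = G'.algModel := by
  simp only [MixedGraph.algModel, hG.model_eq hG' hskel hcoll]
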